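/- For η ∈ I_n let M_η := C_1^(η(1))·C_2^(η(2))⋯C_n^(η(n)), let Im(η) be the image of η, and let S(η) be the set of permutations of {1,…,n} fixing every point outside Im(η). For σ ∈ S(η) let b_σ(η) ∈ A denote the entry of the matrix M_η at row tuple (σ(1),…,σ(n)) and column tuple (1,…,n), and set α(σ,η) := sgn(σ)·∏_{i : i < η(i)} (2u+2−i−n)⁻¹ ∈ K. Put S := ∑_{η∈I_n} ∑_{σ∈S(η)} α(σ,η)·b_σ(η) ∈ A. Then for arbitrary n×n matrices C_1,…,C_n over A and every row tuple g, the entry of A_n·⟨⟨C_1,…,C_n⟩⟩ at position (g, (1,…,n)) equals S times the entry of A_n at position (g, (1,…,n)). (When C_i = B(u−i+1) for the generating matrix B of the reflection algebra, S equals the Sklyanin determinant sdet B(u).) -/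

import Mathlib

/-!
The column-`(1,…,n)` entry is computed by absorbing transpositions into the antisymmetrizer.
Write `Π_k` as a signed weighted sum of the permutation operators `P_{ki}` over `i ≥ k`, with
weight `1` for `i = k` and `(2u+2−k−n)⁻¹` for `i > k`. Moving `P_{ki}` to the left past `C_k^(k)`
gives `C_k^(i)`, so `C_k^(k) Π_k` becomes `F_k = ∑_{i ≥ k} weight(k,i) C_k^(i)`, provided that
`P_{ki}` can then travel on to `A_n`, which absorbs it together with its sign. It can: `F_j` with
`j < k` is symmetric in the factors after `j`, hence commutes with `P_{ki}`. Thus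
`A_n⟨⟨C_1,…,C_n⟩⟩ = A_n F_1 ⋯ F_n` (`antisym_mul_braket`), and expanding the product yields
`∑_{η ∈ I_n} ∏_{i < η(i)} (2u+2−i−n)⁻¹ A_n M_η` (`prod_smear`).

In column `(1,…,n)` the entry of `A_n X` is `∑_σ sgn(σ) X_{σ,id}` times that of `A_n`, because
columns of `A_n` with a repeated index vanish and the others differ by signs
(`antisym_mul_apply_id`). Finally the entry of `M_η` at `(σ, id)` vanishes unless `σ` fixes every
point outside the image of `η` (`prod_act_apply_eq_zero`), which cuts the sum down to `S(η)`.
-/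

/-!
STATEMENT 12: With S := ∑_{η∈I_n} ∑_{σ∈S(η)} α(σ,η)·b_σ(η), for every row
tuple g the (g,(1,…,n)) entry of A_n·⟨⟨C_1,…,C_n⟩⟩ equals S times the
(g,(1,…,n)) entry of A_n. The point `i : Fin n` carries the label `i+1`.
-/

noncomputable section

abbrev K : Type := RatFunc ℚ

def u : K := RatFunc.X

/-- Operators on the n-fold tensor power of K^n with coefficients in A. -/
abbrev Op (A : Type*) (n : ℕ) := Matrix (Fin n → Fin n) (Fin n → Fin n) A

variable {A : Type*} [Ring A] [Algebra K A] {n : ℕ}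

/-- `act C s` = C^(s): the matrix C acting on the s-th tensor factor. -/
def act (C : Matrix (Fin n) (Fin n) A) (s : Fin n) : Op A n :=
  fun f g => if ∀ t, t ≠ s → f t = g t then C (f s) (g s) else 0

/-- `Pop σ` = P_σ: permutation of the tensor factors according to σ. -/
def Pop (σ : Equiv.Perm (Fin n)) : Op A n :=
  fun f g => if f = g ∘ ⇑σ⁻¹ then (1 : A) else 0

/-- P_{ij}. -/
def Pij (i j : Fin n) : Op A n := Pop (Equiv.swap i j)

/-- The antisymmetrizer A_n = ∑_{σ ∈ S_n} sgn(σ) P_σ. -/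
def antisym : Op A n :=
  ∑ σ : Equiv.Perm (Fin n), (((Equiv.Perm.sign σ : ℤ) : K)) • Pop σ

/-- Π_k = 1 − (2u−k−n+2)⁻¹ ∑_{i=k+1}^n P_{ki}, with label k+1. -/
def Piop (k : Fin n) : Op A n :=
  (1 : Op A n) -
    ((2 * u - ((k : ℕ) + 1 : K) - (n : K) + 2)⁻¹ : K) •
      ∑ i ∈ Finset.univ.filter (fun i => k < i), Pij k i

/-- ⟨⟨C_1,…,C_n⟩⟩ = C_1^(1)·Π_1·C_2^(2)·Π_2⋯Π_{n−1}·C_n^(n). -/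
def braket (C : Fin n → Matrix (Fin n) (Fin n) A) : Op A n :=
  ((List.finRange n).map (fun s => act (C s) s * Piop s)).prod

/-- I_n: the tuples η with i ≤ η(i) for all i. -/
def In (n : ℕ) : Finset (Fin n → Fin n) :=
  Finset.univ.filter (fun η => ∀ i, i ≤ η i)

/-- M_η = C_1^(η(1))·C_2^(η(2))⋯C_n^(η(n)). -/
def Mmat (C : Fin n → Matrix (Fin n) (Fin n) A) (η : Fin n → Fin n) : Op A n :=
  ((List.finRange n).map (fun s => act (C s) (η s))).prod

/-- S(η): permutations fixing every point outside the image of η. -/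
def Sset (η : Fin n → Fin n) : Finset (Equiv.Perm (Fin n)) :=
  Finset.univ.filter (fun σ : Equiv.Perm (Fin n) => ∀ j, (∀ i, η i ≠ j) → σ j = j)

/-- α(σ,η) = sgn(σ)·∏_{i : i < η(i)} (2u+2−i−n)⁻¹, with label i+1. -/
def alphaSE (σ : Equiv.Perm (Fin n)) (η : Fin n → Fin n) : K :=
  ((Equiv.Perm.sign σ : ℤ) : K) *
    ∏ i ∈ Finset.univ.filter (fun i => i < η i),
      (2 * u + 2 - ((i : ℕ) + 1 : K) - (n : K))⁻¹

/-- S = ∑_{η∈I_n} ∑_{σ∈S(η)} α(σ,η)·b_σ(η), where b_σ(η) is the entry of M_η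
at row tuple (σ(1),…,σ(n)) and column tuple (1,…,n). -/
def sdetSum (C : Fin n → Matrix (Fin n) (Fin n) A) : A :=
  ∑ η ∈ In n, ∑ σ ∈ Sset η, alphaSE σ η • (Mmat C η : Op A n) (fun t => σ t) (fun t => t)

set_option linter.unusedSectionVars false

/-! ### Permutation operators and the antisymmetrizer -/

lemma Pop_mul_apply (σ : Equiv.Perm (Fin n)) (X : Op A n) (f g : Fin n → Fin n) :
    (Pop σ * X : Op A n) f g = X (f ∘ σ) g := by
  rw [Matrix.mul_apply, Finset.sum_eq_single (f ∘ σ)]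
  · have : f = (f ∘ σ) ∘ ⇑σ⁻¹ := by ext t; simp
    rw [Pop, if_pos this, one_mul]
  · intro h _ hh
    rw [Pop, if_neg, zero_mul]
    rintro rfl
    exact hh (by ext t; simp)
  · simp

lemma mul_Pop_apply (σ : Equiv.Perm (Fin n)) (X : Op A n) (f g : Fin n → Fin n) :
    (X * Pop σ : Op A n) f g = X f (g ∘ ⇑σ⁻¹) := by
  rw [Matrix.mul_apply, Finset.sum_eq_single (g ∘ ⇑σ⁻¹)]
  · simp [Pop]
  · intro h _ hh
    rw [Pop, if_neg hh, mul_zero]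
  · simp

lemma Pop_mul_Pop (σ τ : Equiv.Perm (Fin n)) :
    (Pop σ * Pop τ : Op A n) = Pop (σ * τ) := by
  ext f g
  rw [mul_Pop_apply]
  simp only [Pop, mul_inv_rev, Equiv.Perm.coe_mul, Function.comp_assoc]

lemma Pop_one : (Pop 1 : Op A n) = 1 := by
  ext f g
  simp [Pop, Matrix.one_apply]

lemma Pop_mul_act (C : Matrix (Fin n) (Fin n) A) (σ : Equiv.Perm (Fin n)) (s : Fin n) :
    (Pop σ * act C s : Op A n) = act C (σ s) * Pop σ := by
  ext f g
  rw [Pop_mul_apply, mul_Pop_apply]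
  have hs : σ⁻¹ (σ s) = s := by simp
  simp only [act, Function.comp_apply, hs]
  refine if_congr ?_ rfl rfl
  constructor
  · intro h t ht
    have := h (σ⁻¹ t) (by rintro rfl; simp at ht)
    simpa using this
  · intro h t ht
    have := h (σ t) (by simpa using ht)
    simpa using this

lemma antisym_mul_Pop (τ : Equiv.Perm (Fin n)) :
    (antisym * Pop τ : Op A n) = ((Equiv.Perm.sign τ : ℤ) : K) • antisym := by
  simp only [antisym, Finset.sum_mul, smul_mul_assoc, Pop_mul_Pop, Finset.smul_sum, smul_smul]
  refine Fintype.sum_equiv (Equiv.mulRight τ) _ _ fun σ => ?_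
  have h : (((Equiv.Perm.sign τ : ℤ) : K)) * ((Equiv.Perm.sign τ : ℤ) : K) = 1 := by
    rw [← Int.cast_mul, Int.units_coe_mul_self, Int.cast_one]
  simp only [Equiv.coe_mulRight, Equiv.Perm.sign_mul, Units.val_mul, Int.cast_mul]
  rw [mul_comm ((Equiv.Perm.sign σ : ℤ) : K), ← mul_assoc, h, one_mul]

/-- Permuting the column index multiplies an entry of `A_n` by the sign. -/
lemma antisym_apply_comp (g f : Fin n → Fin n) (τ : Equiv.Perm (Fin n)) :
    (antisym : Op A n) g (f ∘ τ) = ((Equiv.Perm.sign τ : ℤ) : K) • (antisym : Op A n) g f := by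
  have h := congrFun (congrFun (antisym_mul_Pop (A := A) τ⁻¹) g) f
  rwa [mul_Pop_apply, inv_inv, Equiv.Perm.sign_inv, Matrix.smul_apply] at h

/-- A repeated index makes the entry equal to its own negative, and `2` is invertible in `K`. -/
lemma antisym_apply_of_not_injective (g f : Fin n → Fin n) (hf : ¬ Function.Injective f) :
    (antisym : Op A n) g f = 0 := by
  simp only [Function.Injective, not_forall] at hf
  obtain ⟨a, b, hab, hne⟩ := hf
  have h := antisym_apply_comp (A := A) g f (Equiv.swap a b)
  have hcomp : f ∘ Equiv.swap a b = f := by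
    ext t
    simp only [Function.comp_apply, Equiv.swap_apply_def]
    split_ifs with h1 h2 <;> simp [*]
  rw [hcomp, Equiv.Perm.sign_swap hne] at h
  simp only [Units.val_neg, Units.val_one, Int.cast_neg, Int.cast_one, neg_smul, one_smul] at h
  have h2 : (2 : K) • (antisym : Op A n) g f = 0 := by
    rw [two_smul]
    nth_rewrite 1 [h]
    exact neg_add_cancel _
  have : CharZero K := algebraRat.charZero K
  have h3 := congrArg (fun x => (2 : K)⁻¹ • x) h2
  simpa [smul_smul] using h3

/-- The entries of `A_n` are images of scalars, hence central in `A`. -/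
lemma antisym_apply_commute (g f : Fin n → Fin n) (a : A) :
    Commute ((antisym : Op A n) g f) a := by
  rw [antisym, Matrix.sum_apply]
  refine Commute.sum_left _ _ _ fun σ _ => ?_
  rw [Matrix.smul_apply]
  refine Commute.smul_left ?_ _
  rw [Pop]
  split_ifs
  · exact Commute.one_left a
  · exact Commute.zero_left a

/-! ### Absorbing the transpositions into the antisymmetrizer -/

/-- The coefficient `(2u+2−k−n)⁻¹` of `Π_k`; the point `k : Fin n` carries the label `k+1`. -/
def coef (n : ℕ) (k : Fin n) : K := (2 * u + 2 - ((k : ℕ) + 1 : K) - (n : K))⁻¹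

/-- The weight with which `C_k` acts on factor `i` once all transpositions are absorbed:
`1` on its own factor `k`, `(2u+2−k−n)⁻¹` on each later factor, and `0` on each earlier one. -/
def weight (k i : Fin n) : K := if k < i then coef n k else if i = k then 1 else 0

/-- The smeared operator `F_k = ∑_i weight(k,i) · C_k^(i)`, supported on `i ≥ k`. -/
def smear (C : Fin n → Matrix (Fin n) (Fin n) A) (k : Fin n) : Op A n :=
  ∑ i, weight k i • act (C k) i

lemma Piop_eq (k : Fin n) :
    (Piop k : Op A n) =
      ∑ i, (weight k i * ((Equiv.Perm.sign (Equiv.swap k i) : ℤ) : K)) • Pij k i := by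
  have h1 : ∀ i : Fin n,
      (weight k i * ((Equiv.Perm.sign (Equiv.swap k i) : ℤ) : K)) • (Pij k i : Op A n) =
        (if i = k then (1 : Op A n) else 0) - if k < i then coef n k • Pij k i else 0 := by
    intro i
    rcases lt_trichotomy k i with h | rfl | h
    · simp [weight, h, h.ne', Equiv.Perm.sign_swap h.ne]
    · simp [weight, Pij, ← Equiv.Perm.one_def, Pop_one]
    · simp [weight, h.not_gt, h.ne]
  simp only [h1, Finset.sum_sub_distrib, Finset.sum_ite_eq', Finset.mem_univ, if_true]
  have hc : (2 * u - ((k : ℕ) + 1 : K) - (n : K) + 2)⁻¹ = coef n k := by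
    rw [coef]
    congr 1
    ring
  rw [Piop, hc, Finset.sum_filter, Finset.smul_sum]
  simp only [smul_ite, smul_zero]

/-- `F_k` treats all factors after `k` alike, so transposing two of them does not change it. -/
lemma smear_commute (C : Fin n → Matrix (Fin n) (Fin n) A) {k a b : Fin n}
    (ha : k < a) (hb : k < b) :
    Commute (smear C k) (Pop (Equiv.swap a b) : Op A n) := by
  have hw : ∀ i, weight k (Equiv.swap a b i) = weight k i := by
    intro i
    rw [Equiv.swap_apply_def]
    split_ifs with h1 h2
    · subst h1; simp [weight, ha, hb]
    · subst h2; simp [weight, ha, hb]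
    · rfl
  rw [commute_iff_eq, smear, Finset.mul_sum, Finset.sum_mul]
  refine (Fintype.sum_equiv (Equiv.swap a b) _ _ fun i => ?_).symm
  rw [mul_smul_comm, Pop_mul_act, smul_mul_assoc, hw]

/-- One factor `C_k^(k) Π_k` turns into `F_k`: each transposition is moved to the left past
`C_k^(k)` and past the already converted factors `X`, and is absorbed with its sign. -/
lemma antisym_step (C : Fin n → Matrix (Fin n) (Fin n) A) (k : Fin n) (X : Op A n)
    (hX : ∀ i, k ≤ i → Commute X (Pop (Equiv.swap k i))) :
    antisym * X * (act (C k) k * Piop k) = antisym * X * smear C k := by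
  rw [Piop_eq, smear, Finset.mul_sum, Finset.mul_sum, Finset.mul_sum]
  refine Finset.sum_congr rfl fun i _ => ?_
  by_cases hki : k ≤ i
  · have h1 : (act (C k) k * Pij k i : Op A n) = Pop (Equiv.swap k i) * act (C k) i := by
      rw [Pop_mul_act, Equiv.swap_apply_right, Pij]
    have hs : ((Equiv.Perm.sign (Equiv.swap k i) : ℤ) : K) *
        ((Equiv.Perm.sign (Equiv.swap k i) : ℤ) : K) = 1 := by
      rw [← Int.cast_mul, Int.units_coe_mul_self, Int.cast_one]
    rw [mul_smul_comm, mul_smul_comm, mul_smul_comm, h1, mul_assoc, ← mul_assoc X,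
      (hX i hki).eq, mul_assoc, ← mul_assoc antisym, antisym_mul_Pop, smul_mul_assoc, smul_smul,
      mul_assoc (weight k i), hs, mul_one, ← mul_assoc]
  · have hw : weight k i = 0 := by
      rw [weight, if_neg (fun h => hki h.le), if_neg (fun h => hki h.ge)]
    simp [hw]

/-- `X` collects the factors already converted; it has to commute with every transposition that
the remaining `Π_k` can produce, a condition passed on to `X * smear C k`. -/
lemma antisym_mul_list (C : Fin n → Matrix (Fin n) (Fin n) A) (l : List (Fin n))
    (hl : l.Pairwise (· < ·)) (X : Op A n)
    (hX : ∀ k ∈ l, ∀ i, k ≤ i → Commute X (Pop (Equiv.swap k i))) :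
    antisym * X * (l.map (fun s => act (C s) s * Piop s)).prod =
      antisym * X * (l.map (smear C)).prod := by
  induction l generalizing X with
  | nil => simp
  | cons k l ih =>
    rw [List.pairwise_cons] at hl
    simp only [List.map_cons, List.prod_cons]
    rw [← mul_assoc (antisym * X), antisym_step C k X (hX k List.mem_cons_self),
      mul_assoc antisym X, ih hl.2, ← mul_assoc (antisym * X), mul_assoc antisym X]
    intro j hj i hji
    exact (hX j (List.mem_cons_of_mem _ hj) i hji).mul_left
      (smear_commute C (hl.1 j hj) ((hl.1 j hj).trans_le hji))

lemma antisym_mul_braket (C : Fin n → Matrix (Fin n) (Fin n) A) :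
    (antisym * braket C : Op A n) = antisym * ((List.finRange n).map (smear C)).prod := by
  have h := antisym_mul_list C (List.finRange n) (List.pairwise_lt_finRange n) 1
    (fun _ _ _ _ => Commute.one_left _)
  simpa only [mul_one, braket] using h

/-! ### Expanding the product -/

/-- An ordered product of sums in a noncommutative ring is a sum over choice functions. -/
lemma prod_ofFn_sum {R : Type*} [Ring R] {ι : Type*} [Fintype ι] :
    ∀ (m : ℕ) (F : Fin m → ι → R),
      (List.ofFn fun s => ∑ i, F s i).prod = ∑ η : Fin m → ι, (List.ofFn fun s => F s (η s)).prod
  | 0, F => by simp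
  | m + 1, F => by
    rw [List.ofFn_succ, List.prod_cons, prod_ofFn_sum m fun s => F s.succ, Finset.sum_mul_sum,
      ← Fintype.sum_prod_type']
    refine Fintype.sum_equiv (Fin.consEquiv fun _ => ι) _ _ fun x => ?_
    simp [List.ofFn_succ, Fin.consEquiv]

lemma prod_map_smul {ι R : Type*} [Ring R] [Algebra K R] (w : ι → K) (x : ι → R) (l : List ι) :
    (l.map fun s => w s • x s).prod = (l.map w).prod • (l.map x).prod := by
  induction l with
  | nil => simp
  | cons a l ih =>
    simp only [List.map_cons, List.prod_cons]
    rw [ih, smul_mul_smul_comm]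

lemma prod_weight (η : Fin n → Fin n) :
    ∏ i, weight i (η i) =
      if η ∈ In n then ∏ i ∈ Finset.univ.filter (fun i => i < η i), coef n i else 0 := by
  split_ifs with h
  · rw [Finset.prod_filter]
    refine Finset.prod_congr rfl fun i _ => ?_
    have hi : i ≤ η i := (Finset.mem_filter.mp h).2 i
    rw [weight]
    split_ifs with h1 h2
    · rfl
    · rfl
    · exact absurd (hi.lt_of_ne' h2) h1
  · simp only [In, Finset.mem_filter, Finset.mem_univ, true_and, not_forall, not_le] at h
    obtain ⟨i, hi⟩ := h
    refine Finset.prod_eq_zero (Finset.mem_univ i) ?_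
    rw [weight, if_neg hi.not_gt, if_neg hi.ne]

lemma prod_smear (C : Fin n → Matrix (Fin n) (Fin n) A) :
    ((List.finRange n).map (smear C)).prod =
      ∑ η ∈ In n, (∏ i ∈ Finset.univ.filter (fun i => i < η i), coef n i) • Mmat C η := by
  have h : (List.finRange n).map (smear C) =
      List.ofFn fun s => ∑ i, weight s i • (act (C s) i : Op A n) := by
    rw [List.ofFn_eq_map]; rfl
  rw [h, prod_ofFn_sum, ← Finset.sum_filter_add_sum_filter_not Finset.univ (· ∈ In n)]
  have key : ∀ η : Fin n → Fin n,
      (List.ofFn fun s => weight s (η s) • (act (C s) (η s) : Op A n)).prod =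
        (∏ i, weight i (η i)) • Mmat C η := by
    intro η
    rw [List.ofFn_eq_map, prod_map_smul, Mmat, ← List.ofFn_eq_map, List.prod_ofFn]
  simp only [key, prod_weight]
  rw [Finset.sum_eq_zero (s := Finset.univ.filter (· ∉ In n)), add_zero]
  · rw [Finset.filter_mem_eq_inter, Finset.univ_inter]
    exact Finset.sum_congr rfl fun η hη => by rw [if_pos hη]
  · intro η hη
    rw [if_neg (Finset.mem_filter.mp hη).2, zero_smul]

/-! ### Entries in the column of the identity tuple -/

/-- A factor on which none of the matrices acts keeps its index. -/
lemma prod_act_apply_eq_zero (C : Fin n → Matrix (Fin n) (Fin n) A) (η : Fin n → Fin n)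
    (l : List (Fin n)) (j : Fin n) (hj : ∀ i, η i ≠ j) (f g : Fin n → Fin n) (hfg : f j ≠ g j) :
    ((l.map fun s => act (C s) (η s)).prod : Op A n) f g = 0 := by
  induction l generalizing f with
  | nil =>
    rw [List.map_nil, List.prod_nil, Matrix.one_apply_ne]
    rintro rfl
    exact hfg rfl
  | cons a l ih =>
    rw [List.map_cons, List.prod_cons, Matrix.mul_apply]
    refine Finset.sum_eq_zero fun h _ => ?_
    by_cases hh : f j = h j
    · rw [ih h (hh ▸ hfg), mul_zero]
    · rw [act, if_neg (fun H => hh (H j (hj a).symm)), zero_mul]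

/-- Only the permutation rows survive antisymmetrization, each contributing its sign. -/
lemma antisym_mul_apply_id (X : Op A n) (g : Fin n → Fin n) :
    (antisym * X : Op A n) g (fun t => t) =
      (∑ σ : Equiv.Perm (Fin n), ((Equiv.Perm.sign σ : ℤ) : K) • X (fun t => σ t) (fun t => t)) *
        (antisym : Op A n) g (fun t => t) := by
  rw [Matrix.mul_apply, Finset.sum_mul]
  refine (Finset.sum_of_injOn (fun (σ : Equiv.Perm (Fin n)) => (σ : Fin n → Fin n))
    DFunLike.coe_injective.injOn (by simp) ?_ ?_).symm
  · intro f _ hf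
    rw [antisym_apply_of_not_injective, zero_mul]
    intro hinj
    exact hf ⟨Equiv.ofBijective f (Finite.injective_iff_bijective.mp hinj), by simp, rfl⟩
  · intro σ _
    have h := antisym_apply_comp (A := A) g (fun t => t) σ
    have h' : (fun t => t) ∘ (σ : Fin n → Fin n) = σ := rfl
    rw [h'] at h
    rw [h, smul_mul_assoc, smul_mul_assoc, (antisym_apply_commute g _ _).eq]

theorem antisym_braket_entry (hn : 1 ≤ n) (C : Fin n → Matrix (Fin n) (Fin n) A)
    (g : Fin n → Fin n) :
    ((antisym * braket C : Op A n)) g (fun t => t) =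
      sdetSum C * (antisym : Op A n) g (fun t => t) := by
  rw [antisym_mul_braket, prod_smear, antisym_mul_apply_id]
  congr 1
  simp only [Matrix.sum_apply, Matrix.smul_apply, Finset.smul_sum]
  rw [Finset.sum_comm, sdetSum]
  refine Finset.sum_congr rfl fun η _ => ?_
  symm
  refine Finset.sum_subset_zero_on_sdiff (Finset.subset_univ _) ?_ ?_
  · intro σ hσ
    simp only [Sset, Finset.mem_sdiff, Finset.mem_filter, Finset.mem_univ, true_and,
      not_forall] at hσ
    obtain ⟨j, hj, hσj⟩ := hσ
    rw [Mmat, prod_act_apply_eq_zero C η _ j hj _ _ hσj, smul_zero, smul_zero]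
  · intro σ _
    rw [smul_smul, alphaSE]
    rfl

end
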